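/- Two continuous maps f, g : 𝖱^n → 𝖱 are (freely) homotopic if and only if 𝔠(f) = 𝔠(g). -/

import Mathlib

noncomputable section
open Set

/-- The first uncountable ordinal `ω₁`. -/
def Omega1 : Ordinal := Ordinal.omega 1

/-- The closed long ray `𝖱`: `ω₁ × [0,1)` with the lexicographic order. -/
def LongRay : Type 1 := {o : Ordinal // o < Omega1} ×ₗ (Set.Ico (0:ℝ) 1)

instance : LinearOrder LongRay :=
  inferInstanceAs (LinearOrder ({o : Ordinal // o < Omega1} ×ₗ (Set.Ico (0:ℝ) 1)))

/-- `𝖱` carries the order topology. -/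
instance : TopologicalSpace LongRay := Preorder.topology LongRay
instance : OrderTopology LongRay := ⟨rfl⟩

lemma omega1_pos : (0 : Ordinal) < Omega1 := Ordinal.omega_pos 1

/-- The point `0 = (0,0)` of the long ray. -/
def rayZero : LongRay := toLex (⟨0, omega1_pos⟩, ⟨0, by simp⟩)

/-- Identification of the countable ordinal `o` with the point `(o,0)` of the long ray
(junk value for `o ≥ ω₁`). -/
def ordR (o : Ordinal) : LongRay :=
  if h : o < Omega1 then toLex (⟨o, h⟩, ⟨0, by simp⟩) else rayZero

/-- The `I`-diagonal at height `c` (only the values of `c` off `I` are relevant). -/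
def Delta (n : ℕ) (I : Finset (Fin n)) (c : Fin n → LongRay) : Set (Fin n → LongRay) :=
  {x | (∀ i ∈ I, ∀ i' ∈ I, x i = x i') ∧ ∀ j ∉ I, x j = c j}

/-- `f` is `I`-cofinal if `f` restricted to `Δ_I = Δ_I(0)` is unbounded. -/
def ICofinal (n : ℕ) (f : (Fin n → LongRay) → LongRay) (I : Finset (Fin n)) : Prop :=
  ¬ BddAbove (f '' Delta n I (fun _ => rayZero))

/-- The cofinality class `𝔠(f) = {I : f is I-cofinal}`. -/
def cofClass (n : ℕ) (f : (Fin n → LongRay) → LongRay) : Set (Finset (Fin n)) :=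
  {I | ICofinal n f I}

/-- `M_I(c) = {x : x_i ≥ c for all i ∈ I}`. -/
def MSet (n : ℕ) (I : Finset (Fin n)) (c : LongRay) : Set (Fin n → LongRay) :=
  {x | ∀ i ∈ I, c ≤ x i}

/-- `E_I(b,d) = {x ∈ M_I(d) : x_j = b_j for all j ∉ I}`. -/
def ESet (n : ℕ) (I : Finset (Fin n)) (b : Fin n → LongRay) (d : LongRay) :
    Set (Fin n → LongRay) :=
  {x | (∀ i ∈ I, d ≤ x i) ∧ ∀ j ∉ I, x j = b j}

namespace LongRay

/-- The ordinal part of a point of the long ray. -/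
def fst (x : LongRay) : Ordinal := (ofLex (α := _ ×ₗ _) x).1.1

/-- The fractional part of a point of the long ray. -/
def snd (x : LongRay) : ℝ := (ofLex (α := _ ×ₗ _) x).2.1

/-- The point of the long ray with the given ordinal and fractional parts. -/
def mk (o : Ordinal) (ho : o < Omega1) (r : ℝ) (hr : r ∈ Ico (0 : ℝ) 1) : LongRay :=
  toLex (⟨o, ho⟩, ⟨r, hr⟩)

@[simp] lemma fst_mk (o ho r hr) : (mk o ho r hr).fst = o := rfl

@[simp] lemma snd_mk (o ho r hr) : (mk o ho r hr).snd = r := rfl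

lemma fst_lt (x : LongRay) : x.fst < Omega1 := (ofLex (α := _ ×ₗ _) x).1.2

lemma snd_mem (x : LongRay) : x.snd ∈ Ico (0 : ℝ) 1 := (ofLex (α := _ ×ₗ _) x).2.2

lemma lt_iff {x y : LongRay} : x < y ↔ x.fst < y.fst ∨ x.fst = y.fst ∧ x.snd < y.snd := by
  refine (Prod.Lex.lt_iff (α := {o : Ordinal // o < Omega1}) (β := Set.Ico (0 : ℝ) 1)).trans ?_
  simp only [← Subtype.coe_lt_coe, Subtype.ext_iff]
  rfl

lemma le_iff {x y : LongRay} : x ≤ y ↔ x.fst < y.fst ∨ x.fst = y.fst ∧ x.snd ≤ y.snd := by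
  refine (Prod.Lex.le_iff (α := {o : Ordinal // o < Omega1}) (β := Set.Ico (0 : ℝ) 1)).trans ?_
  simp only [← Subtype.coe_lt_coe, ← Subtype.coe_le_coe, Subtype.ext_iff]
  rfl

lemma succ_lt {o : Ordinal} (h : o < Omega1) : Order.succ o < Omega1 :=
  (Cardinal.isSuccLimit_omega 1).succ_lt h

instance : OrderBot LongRay where
  bot := rayZero
  bot_le x := by
    rw [le_iff]
    rcases (zero_le (a := x.fst)).lt_or_eq with h | h
    · exact Or.inl h
    · exact Or.inr ⟨h, x.snd_mem.1⟩

lemma exists_isGLB (s : Set LongRay) (hs : s.Nonempty) : ∃ a, IsGLB s a := by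
  obtain ⟨x, hx, hmin⟩ := (InvImage.wf fst (wellFounded_lt (α := Ordinal))).has_min s hs
  have hmin' : ∀ y ∈ s, x.fst ≤ y.fst := fun y hy => not_lt.1 (hmin y hy)
  set T : Set ℝ := snd '' {y ∈ s | y.fst = x.fst} with hT
  have hTb : BddBelow T := ⟨0, by rintro _ ⟨y, -, rfl⟩; exact y.snd_mem.1⟩
  have hxT : x.snd ∈ T := ⟨x, ⟨hx, rfl⟩, rfl⟩
  have h0 : 0 ≤ sInf T := le_csInf ⟨_, hxT⟩ (by rintro _ ⟨y, -, rfl⟩; exact y.snd_mem.1)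
  refine ⟨mk x.fst x.fst_lt (sInf T) ⟨h0, (csInf_le hTb hxT).trans_lt x.snd_mem.2⟩, ?_, ?_⟩
  · intro y hy
    rw [le_iff]
    rcases (hmin' y hy).lt_or_eq with h | h
    · exact Or.inl h
    · exact Or.inr ⟨h, csInf_le hTb ⟨y, ⟨hy, h.symm⟩, rfl⟩⟩
  · intro w hw
    rw [le_iff]
    rcases le_iff.1 (hw hx) with h | ⟨h, -⟩
    · exact Or.inl h
    · refine Or.inr ⟨h, le_csInf ⟨_, hxT⟩ ?_⟩
      rintro _ ⟨y, ⟨hy, hyx⟩, rfl⟩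
      rcases le_iff.1 (hw hy) with h' | h'
      · exact absurd h' (by rw [h, hyx]; exact lt_irrefl _)
      · exact h'.2

open Classical in
instance : InfSet LongRay := ⟨fun s => if h : s.Nonempty then (exists_isGLB s h).choose else ⊥⟩

instance : SupSet LongRay := ⟨fun s => sInf (upperBounds s)⟩

open Classical in
lemma isGLB_sInf' (s : Set LongRay) (hs : s.Nonempty) : IsGLB s (sInf s) := by
  change IsGLB s (if h : s.Nonempty then (exists_isGLB s h).choose else ⊥)
  rw [dif_pos hs]
  exact (exists_isGLB s hs).choose_spec

instance : ConditionallyCompleteLinearOrderBot LongRay where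
  __ := (inferInstance : LinearOrder LongRay)
  __ := (inferInstance : Lattice LongRay)
  __ := (inferInstance : OrderBot LongRay)
  isLUB_csSup s _ hb := (isGLB_upperBounds).1 (isGLB_sInf' _ hb)
  isGLB_csInf s hs _ := isGLB_sInf' s hs
  csSup_of_not_bddAbove s hs := by
    change sInf (upperBounds s) = sInf (upperBounds ∅)
    rw [Set.not_nonempty_iff_eq_empty.1 hs, upperBounds_empty,
      (isGLB_sInf' univ univ_nonempty).unique isGLB_univ]
    exact dif_neg Set.not_nonempty_empty
  csInf_of_not_bddBelow s hs := absurd (OrderBot.bddBelow s) hs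
  csSup_empty := by
    change sInf (upperBounds ∅) = ⊥
    rw [upperBounds_empty]
    exact (isGLB_sInf' univ univ_nonempty).unique isGLB_univ

instance : NoMaxOrder LongRay where
  exists_gt x := ⟨mk (Order.succ x.fst) (succ_lt x.fst_lt) 0 (by simp),
    lt_iff.2 (Or.inl (Order.lt_succ _))⟩

instance : DenselyOrdered LongRay where
  dense x y h := by
    rcases lt_iff.1 h with h | ⟨h, h'⟩
    · obtain ⟨r, hr, hr'⟩ := exists_between x.snd_mem.2
      exact ⟨mk x.fst x.fst_lt r ⟨x.snd_mem.1.trans hr.le, hr'⟩,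
        lt_iff.2 (Or.inr ⟨rfl, hr⟩), lt_iff.2 (Or.inl h)⟩
    · obtain ⟨r, hr, hr'⟩ := exists_between h'
      exact ⟨mk x.fst x.fst_lt r ⟨x.snd_mem.1.trans hr.le, hr'.trans y.snd_mem.2⟩,
        lt_iff.2 (Or.inr ⟨rfl, hr⟩), lt_iff.2 (Or.inr ⟨h, hr'⟩)⟩

lemma bddAbove_range_seq (u : ℕ → LongRay) : BddAbove (range u) := by
  have hlt : (⨆ k, (u k).fst) < Omega1 := Ordinal.iSup_lt_omega_one fun k => (u k).fst_lt
  refine ⟨mk (Order.succ (⨆ k, (u k).fst)) (succ_lt hlt) 0 (by simp), ?_⟩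
  rintro _ ⟨k, rfl⟩
  exact le_iff.2 (Or.inl (Order.lt_succ_of_le (Ordinal.le_iSup (fun k => (u k).fst) k)))

/-- The set `ω₁ ⊆ 𝖱`. -/
def ordinals : Set LongRay := {x | x.snd = 0}

/-- The least ordinal strictly above `x`. -/
def nextOrdinal (x : LongRay) : LongRay := mk (Order.succ x.fst) (succ_lt x.fst_lt) 0 (by simp)

lemma nextOrdinal_mem (x : LongRay) : nextOrdinal x ∈ ordinals := rfl

lemma lt_nextOrdinal (x : LongRay) : x < nextOrdinal x := lt_iff.2 (Or.inl (Order.lt_succ _))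

/-- The greatest ordinal below `x`. -/
def floor (x : LongRay) : LongRay := mk x.fst x.fst_lt 0 (by simp)

lemma floor_le (x : LongRay) : floor x ≤ x := le_iff.2 (Or.inr ⟨rfl, x.snd_mem.1⟩)

lemma le_floor_of_lt_nextOrdinal {x y : LongRay} (hy : y ∈ ordinals) (h : y < nextOrdinal x) :
    y ≤ floor x := by
  have hy0 : y.snd = 0 := hy
  rcases lt_iff.1 h with h | ⟨-, h⟩
  · rcases (Order.lt_succ_iff.1 h).lt_or_eq with h | h
    · exact le_iff.2 (Or.inl h)
    · exact le_iff.2 (Or.inr ⟨h, hy0.le⟩)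
  · exact absurd h (by simp [hy0, nextOrdinal])

lemma isClosed_ordinals : IsClosed ordinals := by
  rw [← isOpen_compl_iff, isOpen_iff_mem_nhds]
  intro x (hx : x.snd ≠ 0)
  have h0 : floor x < x := lt_iff.2 (Or.inr ⟨rfl, lt_of_le_of_ne x.snd_mem.1 (Ne.symm hx)⟩)
  filter_upwards [Ioo_mem_nhds h0 (lt_nextOrdinal x)] with y hy hy'
  exact (le_floor_of_lt_nextOrdinal hy' hy.2).not_gt hy.1

lemma exists_strictMonoOn (z : LongRay) : ∃ φ : LongRay → ℝ, StrictMonoOn φ (Iic z) := by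
  have : Countable (Iio (Order.succ (Order.succ z.fst))) := by
    rw [← Cardinal.mk_le_aleph0_iff, Cardinal.mk_Iio_ordinal, Cardinal.lift_le_aleph0,
      ← Order.lt_succ_iff, Cardinal.succ_aleph0, ← Cardinal.lt_omega_iff_card_lt]
    exact succ_lt (succ_lt z.fst_lt)
  obtain ⟨e⟩ := Order.embedding_from_countable_to_dense (Iio (Order.succ (Order.succ z.fst))) ℚ
  have he : ∃ e : Ordinal → ℝ, StrictMonoOn e (Iio (Order.succ (Order.succ z.fst))) := by
    refine ⟨fun o => if h : o ∈ Iio (Order.succ (Order.succ z.fst)) then e ⟨o, h⟩ else 0, ?_⟩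
    intro a ha b hb hab
    simp only [dif_pos ha, dif_pos hb]
    exact_mod_cast e.strictMono (Subtype.mk_lt_mk.2 hab)
  clear e
  obtain ⟨e, he⟩ := he
  refine ⟨fun x => e x.fst + x.snd * (e (Order.succ x.fst) - e x.fst), ?_⟩
  have hfst : ∀ x ∈ Iic z, x.fst ≤ z.fst := fun x hx =>
    (le_iff.1 hx).elim (fun h => h.le) (fun h => h.1.le)
  have hm : ∀ x ∈ Iic z, x.fst ∈ Iio (Order.succ (Order.succ z.fst)) := fun x hx =>
    ((hfst x hx).trans_lt (Order.lt_succ _)).trans (Order.lt_succ _)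
  have hm' : ∀ x ∈ Iic z, Order.succ x.fst ∈ Iio (Order.succ (Order.succ z.fst)) := fun x hx =>
    Order.succ_lt_succ ((hfst x hx).trans_lt (Order.lt_succ _))
  have hlt : ∀ x ∈ Iic z, e x.fst < e (Order.succ x.fst) := fun x hx =>
    he (hm x hx) (hm' x hx) (Order.lt_succ _)
  intro x hx y hy hxy
  have h1 := hlt x hx
  have h2 := hlt y hy
  have hx2 := x.snd_mem.2
  have hy2 := y.snd_mem.1
  rcases lt_iff.1 hxy with h | ⟨h, h'⟩
  · have h3 := he.monotoneOn (hm' x hx) (hm y hy) (Order.succ_le_of_lt h)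
    dsimp only
    nlinarith [mul_nonneg hy2 (sub_nonneg.2 h2.le), mul_pos (sub_pos.2 hx2) (sub_pos.2 h1)]
  · dsimp only
    rw [← h]
    nlinarith [mul_pos (sub_pos.2 h') (sub_pos.2 h1)]

lemma exists_surjective (z : LongRay) : ∃ γ : ℝ → Iic z, Continuous γ ∧ Function.Surjective γ := by
  obtain ⟨φ, hφ⟩ := exists_strictMonoOn z
  have hb : ∀ s, BddAbove {v | v ≤ z ∧ φ v ≤ s} := fun s => ⟨z, fun v hv => hv.1⟩
  let γ : ℝ → Iic z := fun s => ⟨sSup {v | v ≤ z ∧ φ v ≤ s}, csSup_le' (a := z) fun v hv => hv.1⟩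
  have hmono : Monotone γ := fun s t hst =>
    csSup_le_csSup' (hb t) fun v hv => ⟨hv.1, hv.2.trans hst⟩
  have hsurj : Function.Surjective γ := by
    rintro ⟨v, hv⟩
    refine ⟨φ v, Subtype.ext ?_⟩
    refine IsGreatest.csSup_eq ⟨⟨hv, le_rfl⟩, ?_⟩
    rintro w ⟨hw, hwv⟩
    exact (hφ.le_iff_le hw hv).1 hwv
  exact ⟨γ, hmono.continuous_of_surjective hsurj, hsurj⟩

instance : FirstCountableTopology LongRay where
  nhds_generated_countable x := by
    obtain ⟨z, hz⟩ := exists_gt x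
    obtain ⟨γ, hγ, hs⟩ := exists_surjective z
    have : TopologicalSpace.SeparableSpace (Iic z) := hs.denseRange.separableSpace hγ
    have : SecondCountableTopology (Iic z) :=
      .of_separableSpace_orderTopology _
    rw [← map_nhds_subtype_coe_eq_nhds (p := (· ∈ Iic z)) hz.le (Iic_mem_nhds hz)]
    infer_instance

instance : PathConnectedSpace LongRay where
  nonempty := ⟨⊥⟩
  joined x y := by
    obtain ⟨γ, hγ, hs⟩ := exists_surjective (x ⊔ y)
    obtain ⟨s, hs'⟩ := hs ⟨x, le_sup_left (b := y)⟩
    obtain ⟨t, ht'⟩ := hs ⟨y, le_sup_right (a := x)⟩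
    have := (PathConnectedSpace.joined s t).map (continuous_subtype_val.comp hγ)
    simpa [hs', ht'] using this

open Filter Topology

/-- Leapfrogging: a relation with arbitrarily large witnesses admits chains converging to
arbitrarily large points. -/
lemma exists_chain {R : ℕ → LongRay → LongRay → Prop} (h : ∀ k a, ∃ b, a ≤ b ∧ R k a b)
    (c : LongRay) : ∃ (u : ℕ → LongRay) (a : LongRay), (∀ k, c ≤ u k) ∧ (∀ k, u k ≤ a) ∧
      Monotone u ∧ Tendsto u atTop (𝓝 a) ∧ ∀ k, R k (u k) (u (k + 1)) := by
  choose next hle hR using h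
  let u : ℕ → LongRay := fun k => Nat.rec c (fun k a => next k a) k
  have hu : Monotone u := monotone_nat_of_le_succ fun k => hle k (u k)
  have hb := bddAbove_range_seq u
  exact ⟨u, ⨆ k, u k, fun k => hu (Nat.zero_le k), fun k => le_ciSup hb k, hu,
    tendsto_atTop_ciSup hu hb, fun k => hR k (u k)⟩

/-- A variant of `exists_chain` producing a convergent sequence of witnesses. -/
lemma exists_tendsto_of_forall_exists {P : ℕ → LongRay → LongRay → Prop}
    (h : ∀ k a, ∃ x, a ≤ x ∧ P k a x) (c : LongRay) :
    ∃ (u v : ℕ → LongRay) (a : LongRay), c ≤ a ∧ Tendsto u atTop (𝓝 a) ∧ Tendsto v atTop (𝓝 a) ∧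
      ∀ k, P k (u k) (v k) := by
  obtain ⟨u, a, hc, ha, -, hu, hR⟩ := exists_chain
    (R := fun k a b => ∃ x, a ≤ x ∧ x ≤ b ∧ P k a x) (fun k a => by
      obtain ⟨x, hx, hP⟩ := h k a
      exact ⟨x, hx, x, hx, le_rfl, hP⟩) c
  choose v h1 h2 h3 using hR
  exact ⟨u, v, a, (hc 0).trans (ha 0), hu,
    tendsto_of_tendsto_of_tendsto_of_le_of_le hu (hu.comp (tendsto_add_atTop_nat 1)) h1 h2, h3⟩

/-- Two closed unbounded sets have a closed unbounded intersection. -/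
lemma frequently_mem_inter {A B : Set LongRay} (hA : IsClosed A) (hB : IsClosed B)
    (hA' : ∃ᶠ x in atTop, x ∈ A) (hB' : ∃ᶠ x in atTop, x ∈ B) : ∃ᶠ x in atTop, x ∈ A ∩ B := by
  rw [frequently_atTop] at *
  intro c
  obtain ⟨u, a, hc, ha, -, hu, hR⟩ := exists_chain
    (R := fun _ a b => ∃ x ∈ A, ∃ y ∈ B, a ≤ x ∧ x ≤ b ∧ a ≤ y ∧ y ≤ b) (fun _ a => by
      obtain ⟨x, hx, hxA⟩ := hA' a
      obtain ⟨y, hy, hyB⟩ := hB' a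
      exact ⟨x ⊔ y, hx.trans le_sup_left, x, hxA, y, hyB, hx, le_sup_left, hy, le_sup_right⟩) c
  choose x hx y hy h1 h2 h3 h4 using hR
  have hu' := hu.comp (tendsto_add_atTop_nat 1)
  exact ⟨a, (hc 0).trans (ha 0),
    hA.mem_of_tendsto (tendsto_of_tendsto_of_tendsto_of_le_of_le hu hu' h1 h2)
      (Eventually.of_forall hx),
    hB.mem_of_tendsto (tendsto_of_tendsto_of_tendsto_of_le_of_le hu hu' h3 h4)
      (Eventually.of_forall hy)⟩

/-- A continuous unbounded map takes large values at arbitrarily large points. -/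
lemma exists_le_apply {h : LongRay → LongRay} (hc : Continuous h)
    (hu : ¬ BddAbove (range h)) (a : LongRay) : ∃ x, a ≤ x ∧ a ≤ h x := by
  by_contra! hlt
  obtain ⟨m, hm⟩ := ((isCompact_Icc (a := ⊥) (b := a)).image hc).bddAbove
  refine hu ⟨m ⊔ a, ?_⟩
  rintro _ ⟨x, rfl⟩
  rcases le_total a x with hx | hx
  · exact (hlt x hx).le.trans le_sup_right
  · exact (hm ⟨x, ⟨bot_le, hx⟩, rfl⟩).trans le_sup_left

lemma frequently_le_apply {h : LongRay → LongRay} (hc : Continuous h)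
    (hu : ¬ BddAbove (range h)) : ∃ᶠ x in atTop, x ≤ h x := by
  rw [frequently_atTop]
  intro c
  obtain ⟨u, v, a, hca, hu, hv, hP⟩ := exists_tendsto_of_forall_exists
    (P := fun _ a x => a ≤ h x) (fun _ a => exists_le_apply hc hu a) c
  exact ⟨a, hca, le_of_tendsto_of_tendsto' hu ((hc.tendsto a).comp hv) hP⟩

/-- A continuous unbounded self-map of the long ray is proper. -/
lemma tendsto_atTop_of_not_bddAbove {h : LongRay → LongRay} (hc : Continuous h)
    (hu : ¬ BddAbove (range h)) : Tendsto h atTop atTop := by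
  refine tendsto_atTop.2 fun b => ?_
  by_contra hb
  have hb' : ∃ᶠ x in atTop, x ∈ {x | h x ≤ b} :=
    (not_eventually.1 hb).mono fun x hx => (not_le.1 hx).le
  obtain ⟨x, hbx, hx1, hx2⟩ := frequently_atTop'.1 (frequently_mem_inter
    (isClosed_le continuous_id hc) (isClosed_le hc continuous_const)
    (frequently_le_apply hc hu) hb') b
  exact (hbx.trans_le (le_trans hx1 hx2)).false

/-- Boundedness of a self-map of the long ray is a homotopy invariant. -/
lemma bddAbove_range_of_homotopic {f g : C(LongRay, LongRay)} (h : f.Homotopic g)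
    (hf : BddAbove (range f)) : BddAbove (range g) := by
  obtain ⟨H⟩ := h
  let B : Set unitInterval := {t | BddAbove (range fun x => H (t, x))}
  have hcont : ∀ t, Continuous fun x => H (t, x) := fun t => by fun_prop
  have hB : IsClopen B := by
    constructor
    · refine IsSeqClosed.isClosed fun t s ht hs => ?_
      choose m hm using ht
      obtain ⟨M, hM⟩ := bddAbove_range_seq m
      refine ⟨M, ?_⟩
      rintro _ ⟨x, rfl⟩
      have h1 : Tendsto (fun k => H (t k, x)) atTop (𝓝 (H (s, x))) :=
        (H.continuous.tendsto _).comp (hs.prodMk_nhds tendsto_const_nhds)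
      exact le_of_tendsto' h1 fun k => (hm k ⟨x, rfl⟩).trans (hM ⟨k, rfl⟩)
    · rw [← isClosed_compl_iff]
      refine IsSeqClosed.isClosed fun t s ht hs => ?_
      rintro ⟨M, hM⟩
      obtain ⟨c, hc⟩ := exists_gt M
      obtain ⟨u, v, a, hca, hu, hv, hP⟩ := exists_tendsto_of_forall_exists
        (P := fun k a x => a ≤ H (t k, x)) (fun k a => exists_le_apply (hcont (t k)) (ht k) a) c
      have h1 : Tendsto (fun k => H (t k, v k)) atTop (𝓝 (H (s, a))) :=
        (H.continuous.tendsto _).comp (hs.prodMk_nhds hv)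
      exact ((hc.trans_le hca).trans_le (le_of_tendsto_of_tendsto' hu h1 hP)).not_ge
        (hM ⟨a, rfl⟩)
  have h0 : (0 : unitInterval) ∈ B := by simpa [B] using hf
  have h1 : (1 : unitInterval) ∈ B := by
    rcases isClopen_iff.1 hB with h | h
    · simp [h] at h0
    · simp [h]
  simpa [B] using h1

variable {ι : Type*} [DecidableEq ι]

/-- The point of the `I`-diagonal at height `y` whose `I`-coordinates are `a`. -/
def diag (I : Finset ι) (y : ι → LongRay) (a : LongRay) : ι → LongRay :=
  fun i => if i ∈ I then a else y i

lemma continuous_diag (I : Finset ι) :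
    Continuous fun p : (ι → LongRay) × LongRay => diag I p.1 p.2 := by
  refine continuous_pi fun i => ?_
  by_cases hi : i ∈ I <;> simp only [diag, hi, if_true, if_false] <;> fun_prop

/-- `f` is unbounded on the `I`-diagonal. -/
def Cofinal (f : C(ι → LongRay, LongRay)) (I : Finset ι) : Prop :=
  ¬ BddAbove (range fun a => f (diag I ⊥ a))

/-- The restriction of `f` to the `I`-diagonal at height `y`. -/
def restrictDiag (f : C(ι → LongRay, LongRay)) (I : Finset ι) (y : ι → LongRay) :
    C(LongRay, LongRay) :=
  ⟨fun a => f (diag I y a), f.continuous.comp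
    ((continuous_diag I).comp (continuous_const.prodMk continuous_id))⟩

lemma restrictDiag_homotopic {f g : C(ι → LongRay, LongRay)} (h : f.Homotopic g) (I : Finset ι)
    (y : ι → LongRay) : (restrictDiag f I y).Homotopic (restrictDiag g I y) :=
  h.comp (.refl ⟨diag I y, (continuous_diag I).comp (continuous_const.prodMk continuous_id)⟩)

lemma restrictDiag_homotopic_height (f : C(ι → LongRay, LongRay)) (I : Finset ι)
    (y z : ι → LongRay) : (restrictDiag f I y).Homotopic (restrictDiag f I z) := by
  have p := PathConnectedSpace.somePath y z
  exact ⟨{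
    toFun := fun q => f (diag I (p q.1) q.2)
    continuous_toFun := f.continuous.comp
      ((continuous_diag I).comp (by fun_prop : Continuous fun q : unitInterval × LongRay =>
        (p q.1, q.2)))
    map_zero_left := by simp [restrictDiag]
    map_one_left := by simp [restrictDiag] }⟩

lemma Cofinal.of_homotopic {f g : C(ι → LongRay, LongRay)} (h : f.Homotopic g) {I : Finset ι}
    (hf : Cofinal f I) : Cofinal g I := fun hg =>
  hf (bddAbove_range_of_homotopic (restrictDiag_homotopic h.symm I ⊥) hg)

lemma Cofinal.tendsto {f : C(ι → LongRay, LongRay)} {I : Finset ι} (hf : Cofinal f I)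
    (y : ι → LongRay) : Tendsto (fun a => f (diag I y a)) atTop atTop :=
  tendsto_atTop_of_not_bddAbove (restrictDiag f I y).continuous fun h =>
    hf (bddAbove_range_of_homotopic (restrictDiag_homotopic_height f I y ⊥) h)

lemma bddAbove_of_not_cofinal {f : C(ι → LongRay, LongRay)} {I : Finset ι} (hf : ¬ Cofinal f I)
    (y : ι → LongRay) : BddAbove (range fun a => f (diag I y a)) :=
  bddAbove_range_of_homotopic (restrictDiag_homotopic_height f I ⊥ y) (not_not.1 hf)

/-- Cofinality passes to larger diagonals. -/
lemma Cofinal.mono {f : C(ι → LongRay, LongRay)} {I J : Finset ι} (hf : Cofinal f I)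
    (hIJ : I ⊆ J) : Cofinal f J := by
  rintro ⟨M, hM⟩
  obtain ⟨c, hc⟩ := exists_gt M
  obtain ⟨u, v, a, hca, hu, hv, hP⟩ := exists_tendsto_of_forall_exists
    (P := fun _ a x => a ≤ f (diag I (diag J ⊥ a) x)) (fun _ a => by
      obtain ⟨x, h1, h2⟩ := ((eventually_ge_atTop a).and
        ((hf.tendsto (diag J ⊥ a)).eventually_ge_atTop a)).exists
      exact ⟨x, h1, h2⟩) c
  have hd : diag I (diag J ⊥ a) a = diag J ⊥ a := by
    funext i
    by_cases hi : i ∈ I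
    · simp [diag, hi, hIJ hi]
    · simp [diag, hi]
  have h1 : Tendsto (fun k => diag I (diag J ⊥ (u k)) (v k)) atTop (𝓝 (diag J ⊥ a)) := by
    rw [← hd]
    exact ((continuous_diag I).tendsto (diag J ⊥ a, a)).comp
      ((((continuous_diag J).tendsto (⊥, a)).comp (tendsto_const_nhds.prodMk_nhds hu)).prodMk_nhds
        hv)
  exact ((hc.trans_le hca).trans_le
    (le_of_tendsto_of_tendsto' hu ((f.continuous.tendsto _).comp h1) hP)).not_ge (hM ⟨a, rfl⟩)

variable [Finite ι]

/-- If `X a` has `I`-coordinates at least `a` and all other coordinates bounded, then the points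
`X a` accumulate at arbitrarily large points of some fixed `I`-diagonal. -/
lemma exists_tendsto_diag (I : Finset ι) (X : LongRay → ι → LongRay) (b : LongRay)
    (hI : ∀ a, ∀ i ∈ I, a ≤ X a i) (hb : ∀ a, ∀ j ∉ I, X a j ≤ b) :
    ∃ y, ∀ c, ∃ a, c ≤ a ∧ ∃ v : ℕ → LongRay, Tendsto v atTop (𝓝 a) ∧
      Tendsto (fun k => X (v k)) atTop (𝓝 (diag I y a)) := by
  obtain ⟨y, -, hy⟩ := (isCompact_Icc (a := ⊥) (b := fun _ : ι => b)).exists_mapClusterPt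
    (f := atTop) (u := fun a => diag I (X a) ⊥) (by
      rw [Filter.le_principal_iff, Filter.mem_map]
      refine Filter.univ_mem' fun a => ⟨bot_le, fun i => ?_⟩
      by_cases hi : i ∈ I
      · simp [diag, hi]
      · simpa [diag, hi] using hb a i hi)
  refine ⟨y, fun c => ?_⟩
  obtain ⟨V, hV⟩ := (𝓝 y).exists_antitone_basis
  obtain ⟨u, a, hc, ha, -, hu, hR⟩ := exists_chain
    (R := fun k a b => ∃ x, a ≤ x ∧ x ≤ b ∧ diag I (X x) ⊥ ∈ V k ∧ ∀ i, X x i ≤ b) (fun k a => by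
      obtain ⟨x, hx, hxV⟩ :=
        frequently_atTop.1 (mapClusterPt_iff_frequently.1 hy _ (hV.1.mem_of_mem trivial)) a
      obtain ⟨m, hm⟩ := (Set.finite_range (X x)).bddAbove
      exact ⟨x ⊔ m, hx.trans le_sup_left, x, hx, le_sup_left, hxV,
        fun i => (hm ⟨i, rfl⟩).trans le_sup_right⟩) c
  choose v h1 h2 h3 h4 using hR
  have hu' := hu.comp (tendsto_add_atTop_nat 1)
  refine ⟨a, (hc 0).trans (ha 0), v,
    tendsto_of_tendsto_of_tendsto_of_le_of_le hu hu' h1 h2, tendsto_pi_nhds.2 fun i => ?_⟩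
  by_cases hi : i ∈ I
  · simp only [diag, hi, if_true]
    exact tendsto_of_tendsto_of_tendsto_of_le_of_le hu hu'
      (fun k => (h1 k).trans (hI _ i hi)) fun k => h4 k i
  · simpa [diag, hi] using tendsto_pi_nhds.1 (hV.tendsto h3) i

/-- On a cofinal diagonal with bounded transverse coordinates, `f` is eventually large. -/
lemma Cofinal.eventually_le {f : C(ι → LongRay, LongRay)} {I : Finset ι} (hf : Cofinal f I)
    (b c : LongRay) :
    ∀ᶠ d in atTop, ∀ x : ι → LongRay, (∀ i ∈ I, d ≤ x i) → (∀ j ∉ I, x j ≤ b) → c ≤ f x := by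
  suffices h : ∃ d, ∀ x : ι → LongRay, (∀ i ∈ I, d ≤ x i) → (∀ j ∉ I, x j ≤ b) → c ≤ f x by
    obtain ⟨d, hd⟩ := h
    filter_upwards [eventually_ge_atTop d] with e he x hx
    exact hd x fun i hi => he.trans (hx i hi)
  by_contra! h
  choose X hI hb hX using h
  obtain ⟨y, hy⟩ := exists_tendsto_diag I X b hI hb
  obtain ⟨d, hd⟩ := eventually_atTop.1 ((hf.tendsto y).eventually_gt_atTop c)
  obtain ⟨a, hda, v, -, hv⟩ := hy d
  exact (le_of_tendsto' ((f.continuous.tendsto _).comp hv) fun k => (hX (v k)).le).not_gt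
    (hd a hda)

/-- If the `J`-diagonal is not cofinal, then `f` is bounded where the transverse coordinates
are. -/
lemma exists_forall_le_of_not_cofinal {f : C(ι → LongRay, LongRay)} {J : Finset ι}
    (hf : ¬ Cofinal f J) (b : LongRay) :
    ∃ M, ∀ x : ι → LongRay, (∀ j ∉ J, x j ≤ b) → f x ≤ M := by
  induction J using Finset.strongInduction generalizing b with
  | H J ih =>
    by_contra! h
    have key : ∀ a, ∃ x : ι → LongRay, (∀ i ∈ J, a ≤ x i) ∧ (∀ j ∉ J, x j ≤ b) ∧ a ≤ f x := by
      intro a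
      have h1 : ∀ i ∈ J, ∃ M, ∀ x : ι → LongRay, (∀ j ∉ J.erase i, x j ≤ a ⊔ b) → f x ≤ M :=
        fun i hi => ih _ (Finset.erase_ssubset hi)
          (fun hc => hf (hc.mono (Finset.erase_subset _ _))) _
      choose! M hM using h1
      obtain ⟨N, hN⟩ := (J.finite_toSet.image M).bddAbove
      obtain ⟨x, hx, hxN⟩ := h (N ⊔ a)
      refine ⟨x, fun i hi => ?_, hx, le_sup_right.trans hxN.le⟩
      by_contra! hlt
      refine (le_sup_left.trans_lt hxN).not_ge ((hM i hi x fun j hj => ?_).trans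
        (hN ⟨i, hi, rfl⟩))
      by_cases hji : j = i
      · exact hji ▸ hlt.le.trans le_sup_left
      · exact (hx j fun hjJ => hj (Finset.mem_erase.2 ⟨hji, hjJ⟩)).trans le_sup_right
    choose X hI hb hX using key
    obtain ⟨y, hy⟩ := exists_tendsto_diag J X b hI hb
    obtain ⟨M, hM⟩ := bddAbove_of_not_cofinal hf y
    obtain ⟨c, hc⟩ := exists_gt M
    obtain ⟨a, hca, v, hv, hXv⟩ := hy c
    exact ((hc.trans_le hca).trans_le (le_of_tendsto_of_tendsto' hv
      ((f.continuous.tendsto _).comp hXv) fun k => hX (v k))).not_ge (hM ⟨a, rfl⟩)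

section Club

variable {C : Set LongRay}

/-- The greatest element of `C` below `x`. -/
def lower (C : Set LongRay) (x : LongRay) : LongRay := sSup (C ∩ Iic x)

/-- The least element of `C` above `x`, if `C` consists of ordinals. -/
def upper (C : Set LongRay) (x : LongRay) : LongRay := sInf (C ∩ Ici (nextOrdinal x))

lemma lower_mem (hC : IsClosed C) (h0 : ⊥ ∈ C) (x : LongRay) : lower C x ∈ C :=
  ((hC.inter isClosed_Iic).csSup_mem ⟨⊥, h0, bot_le (a := x)⟩ ⟨x, fun _ h => h.2⟩).1

lemma lower_le (x : LongRay) : lower C x ≤ x := csSup_le' fun _ h => h.2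

lemma le_lower {a x : LongRay} (ha : a ∈ C) (h : a ≤ x) : a ≤ lower C x :=
  le_csSup ⟨x, fun _ h => h.2⟩ ⟨ha, h⟩

lemma upper_mem_inter (hC : IsClosed C) (hu : ∃ᶠ a in atTop, a ∈ C) (x : LongRay) :
    upper C x ∈ C ∩ Ici (nextOrdinal x) := by
  obtain ⟨a, ha, haC⟩ := frequently_atTop.1 hu (nextOrdinal x)
  exact (hC.inter isClosed_Ici).csInf_mem ⟨a, haC, ha⟩ (OrderBot.bddBelow _)

lemma lt_upper (hC : IsClosed C) (hu : ∃ᶠ a in atTop, a ∈ C) (x : LongRay) : x < upper C x :=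
  (lt_nextOrdinal x).trans_le (upper_mem_inter hC hu x).2

lemma upper_le (hord : C ⊆ ordinals) {a x : LongRay} (ha : a ∈ C) (h : x < a) :
    upper C x ≤ a := by
  refine csInf_le (OrderBot.bddBelow _) ⟨ha, ?_⟩
  by_contra hlt
  exact ((le_floor_of_lt_nextOrdinal (hord ha) (not_le.1 hlt)).trans (floor_le x)).not_gt h

lemma lt_upper_lower (hC : IsClosed C) (hu : ∃ᶠ a in atTop, a ∈ C) (x : LongRay) :
    x < upper C (lower C x) := by
  by_contra! h
  exact (le_lower (upper_mem_inter hC hu _).1 h).not_gt (lt_upper hC hu _)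

lemma lower_eq (hC : IsClosed C) (h0 : ⊥ ∈ C) (hord : C ⊆ ordinals) {a x : LongRay} (ha : a ∈ C)
    (hax : a ≤ x) (hx : x < upper C a) : lower C x = a := by
  refine ((le_lower ha hax).lt_or_eq.resolve_left fun h => ?_).symm
  exact ((upper_le hord (lower_mem hC h0 x) h).trans (lower_le x)).not_gt hx

/-- Comparable maps that are not separated by any point of a closed unbounded set of ordinals are
homotopic: between consecutive points `a < b` of that set, cut off along a path from `a` to `b`. -/
lemma homotopic_of_le {X : Type*} [TopologicalSpace X] {f g : C(X, LongRay)}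
    (hfg : ∀ x, f x ≤ g x) (hC : IsClosed C) (hu : ∃ᶠ a in atTop, a ∈ C) (hord : C ⊆ ordinals)
    (h0 : ⊥ ∈ C) (hsep : ∀ a ∈ C, ∀ x, f x < a → g x ≤ a) : f.Homotopic g := by
  let P : ∀ a, Path a (upper C a) := fun a => PathConnectedSpace.somePath a (upper C a)
  let H : unitInterval × X → LongRay := fun q => f q.2 ⊔ (g q.2 ⊓ P (lower C (f q.2)) q.1)
  refine ⟨{ toFun := H, continuous_toFun := ?_, map_zero_left := ?_, map_one_left := ?_ }⟩
  · refine continuous_iff_continuousAt.2 ?_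
    rintro ⟨t, x⟩
    have hf : Tendsto (fun q : unitInterval × X => f q.2) (𝓝 (t, x)) (𝓝 (f x)) :=
      (f.continuous.comp continuous_snd).tendsto (t, x)
    have hg : Tendsto (fun q : unitInterval × X => g q.2) (𝓝 (t, x)) (𝓝 (g x)) :=
      (g.continuous.comp continuous_snd).tendsto (t, x)
    rcases (hfg x).eq_or_lt with heq | hlt
    · have hH : H (t, x) = f x :=
        le_antisymm (sup_le le_rfl (inf_le_left.trans heq.ge)) le_sup_left
      rw [ContinuousAt, hH]
      exact tendsto_of_tendsto_of_tendsto_of_le_of_le hf (heq ▸ hg) (fun q => le_sup_left)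
        fun q => sup_le (hfg _) inf_le_left
    · set a := lower C (f x) with ha
      have haC : a ∈ C := lower_mem hC h0 _
      have h1 : ∀ᶠ q : unitInterval × X in 𝓝 (t, x), f q.2 < upper C a :=
        hf.eventually_lt_const (lt_upper_lower hC hu _)
      have h2 : ∀ᶠ q : unitInterval × X in 𝓝 (t, x), a ≤ f q.2 := by
        rcases (lower_le (C := C) (f x)).eq_or_lt with h | h
        · filter_upwards [hg.eventually_const_lt hlt] with q hq
          by_contra! hqa
          exact (hsep a haC q.2 hqa).not_gt (by rwa [ha, h])
        · exact (hf.eventually_const_lt h).mono fun q hq => hq.le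
      have h3 : ContinuousAt (fun q : unitInterval × X => f q.2 ⊔ (g q.2 ⊓ P a q.1)) (t, x) := by
        fun_prop
      refine h3.congr ?_
      filter_upwards [h1, h2] with q hq1 hq2
      have hq : lower C (f q.2) = a := lower_eq hC h0 hord haC hq2 hq1
      simp only [H]
      rw [hq]
  · intro x
    simp only [H, Path.source]
    exact sup_eq_left.2 (inf_le_right.trans (lower_le _))
  · intro x
    simp only [H, Path.target]
    rw [inf_eq_left.2 (hsep _ (upper_mem_inter hC hu _).1 x (lt_upper_lower hC hu _))]
    exact sup_eq_right.2 (hfg x)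

end Club

/-- The points that do not strictly separate values of `f` from values of `g`. -/
def nonseparating {X : Type*} [TopologicalSpace X] (f g : C(X, LongRay)) : Set LongRay :=
  {a | ∀ x, (f x < a → g x ≤ a) ∧ (g x < a → f x ≤ a)}

lemma isClosed_nonseparating {X : Type*} [TopologicalSpace X] (f g : C(X, LongRay)) :
    IsClosed (nonseparating f g) := by
  have h : ∀ y z : LongRay, IsClosed {a : LongRay | y < a → z ≤ a} := fun y z => by
    simp only [imp_iff_not_or, not_lt]
    exact isClosed_Iic.union isClosed_Ici
  simp only [nonseparating, ofPred_forall, ofPred_and]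
  exact isClosed_iInter fun x => (h _ _).inter (h _ _)

variable {ι : Type*} [DecidableEq ι] [Finite ι]

lemma frequently_nonseparating {f g : C(ι → LongRay, LongRay)}
    (h : ∀ I, Cofinal f I ↔ Cofinal g I) :
    ∃ᶠ a in atTop, a ∈ ordinals ∩ nonseparating f g := by
  have hlarge : ∀ (F : C(ι → LongRay, LongRay)) (a : LongRay), ∀ᶠ d in atTop, ∀ I, Cofinal F I →
      ∀ x : ι → LongRay, (∀ i ∈ I, d ≤ x i) → (∀ j ∉ I, x j ≤ a) → a ≤ F x := fun F a => by
    cases nonempty_fintype ι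
    refine eventually_all.2 fun I => ?_
    by_cases hI : Cofinal F I
    · exact (hI.eventually_le a a).mono fun d hd _ => hd
    · exact Eventually.of_forall fun d hd => absurd hd hI
  have hsmall : ∀ (F : C(ι → LongRay, LongRay)) (a : LongRay), ∀ᶠ d in atTop, ∀ I, ¬ Cofinal F I →
      ∀ x : ι → LongRay, (∀ j ∉ I, x j ≤ a) → F x ≤ d := fun F a => by
    cases nonempty_fintype ι
    refine eventually_all.2 fun I => ?_
    by_cases hI : Cofinal F I
    · exact Eventually.of_forall fun d hd => absurd hI hd
    · obtain ⟨M, hM⟩ := exists_forall_le_of_not_cofinal hI a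
      exact (eventually_ge_atTop M).mono fun d hd _ x hx => (hM x hx).trans hd
  have hord : ∃ᶠ d in atTop, d ∈ ordinals := frequently_atTop.2 fun a =>
    ⟨nextOrdinal a, (lt_nextOrdinal a).le, nextOrdinal_mem a⟩
  rw [frequently_atTop]
  intro c
  obtain ⟨u, a, hc, hua, hmono, hu, hR⟩ := exists_chain (fun _ a => by
    obtain ⟨d, hd, h⟩ := (hord.and_eventually ((eventually_ge_atTop a).and
      (((hlarge f a).and (hlarge g a)).and ((hsmall f a).and (hsmall g a))))).exists
    exact ⟨d, h.1, And.intro hd h.2⟩) c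
  have hu' := hu.comp (tendsto_add_atTop_nat 1)
  refine ⟨a, (hc 0).trans (hua 0), isClosed_ordinals.mem_of_tendsto hu'
    (Eventually.of_forall fun k => (hR k).1), fun x => ?_⟩
  classical
  cases nonempty_fintype ι
  set J : Finset ι := Finset.univ.filter fun i => a ≤ x i with hJ
  have hoff : ∀ᶠ k in atTop, ∀ j ∉ J, x j ≤ u k := by
    refine eventually_all.2 fun j => ?_
    by_cases hj : a ≤ x j
    · exact Eventually.of_forall fun k hk => absurd (by simpa [hJ] using hj) hk
    · exact (hu.eventually_const_lt (not_le.1 hj)).mono fun k hk _ => hk.le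
  have hon : ∀ k, ∀ i ∈ J, u k ≤ x i := fun k i hi =>
    (hua k).trans (by simpa [hJ] using hi)
  by_cases hfJ : Cofinal f J
  · have hgJ := (h J).1 hfJ
    have hf : a ≤ f x := le_of_tendsto hu (hoff.mono fun k hk =>
      (hR k).2.1.1 J hfJ x (hon (k + 1)) hk)
    have hg : a ≤ g x := le_of_tendsto hu (hoff.mono fun k hk =>
      (hR k).2.1.2 J hgJ x (hon (k + 1)) hk)
    exact ⟨fun h => absurd h hf.not_gt, fun h => absurd h hg.not_gt⟩
  · have hgJ := fun hg => hfJ ((h J).2 hg)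
    obtain ⟨k, hk⟩ := hoff.exists
    exact ⟨fun _ => ((hR k).2.2.2 J hgJ x hk).trans (hua _),
      fun _ => ((hR k).2.2.1 J hfJ x hk).trans (hua _)⟩

lemma homotopic_of_cofinal_iff {f g : C(ι → LongRay, LongRay)}
    (h : ∀ I, Cofinal f I ↔ Cofinal g I) : f.Homotopic g := by
  set C := ordinals ∩ nonseparating f g with hC
  have hclosed : IsClosed C := isClosed_ordinals.inter (isClosed_nonseparating f g)
  have h0 : ⊥ ∈ C := ⟨rfl, fun x => ⟨fun h => absurd h not_lt_bot, fun h => absurd h not_lt_bot⟩⟩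
  have hf : f.Homotopic (f ⊔ g) := homotopic_of_le (fun x => le_sup_left) hclosed
    (frequently_nonseparating h) inter_subset_left h0
    fun a ha x hx => sup_le hx.le ((ha.2 x).1 hx)
  have hg : g.Homotopic (f ⊔ g) := homotopic_of_le (fun x => le_sup_right) hclosed
    (frequently_nonseparating h) inter_subset_left h0
    fun a ha x hx => sup_le ((ha.2 x).2 hx) hx.le
  exact hf.trans hg.symm

lemma mem_cofClass_iff {n : ℕ} (f : C(Fin n → LongRay, LongRay)) (I : Finset (Fin n)) :
    I ∈ cofClass n f ↔ Cofinal f I := by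
  have h : Delta n I (fun _ => rayZero) = range (diag I ⊥) := by
    ext x
    constructor
    · rintro ⟨h1, h2⟩
      rcases I.eq_empty_or_nonempty with rfl | ⟨i, hi⟩
      · exact ⟨⊥, funext fun j => (h2 j (by simp)).symm⟩
      · refine ⟨x i, funext fun j => ?_⟩
        by_cases hj : j ∈ I
        · simpa [diag, hj] using h1 i hi j hj
        · simp only [diag, hj, if_false]
          exact (h2 j hj).symm
    · rintro ⟨a, rfl⟩
      exact ⟨fun i hi j hj => by simp [diag, hi, hj], fun j hj => by simp [diag, hj]; rfl⟩
  rw [cofClass, mem_ofPred_eq, ICofinal, h, ← range_comp]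
  rfl

end LongRay

/-- two continuous maps `f, g : 𝖱ⁿ → 𝖱` are (freely) homotopic iff
they have the same cofinality class. -/
theorem homotopic_iff_cofClass_eq (n : ℕ) (f g : C(Fin n → LongRay, LongRay)) :
    f.Homotopic g ↔ cofClass n f = cofClass n g := by
  simp only [Set.ext_iff, LongRay.mem_cofClass_iff]
  exact ⟨fun h I => ⟨.of_homotopic h, .of_homotopic h.symm⟩, LongRay.homotopic_of_cofinal_iff⟩
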